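/- Let F be the presented group with generators a, b, c, d and relators a², b², c², d², bcd. Let K be the subgroup generated by b, c, d and A the subgroup generated by a. For a sequence (ω_n) of homomorphisms ω_n : K → A, let φ_n : F → F ≀ 2 be the homomorphism with φ_n(a) = ⟨1,1⟩σ (σ the transposition) and φ_n(x) = ⟨ω_n(x), x⟩ for x ∈ {b, c, d}. Then the similar group (G_n = F, φ_n, d_n = 2) contracts to the constant sequence N_n = image of {1, a, b, c, d} in F: for every n and every g ∈ F, for all sufficiently large m, every entry of φ_n^m(g) lies in the image of {1, a, b, c, d}. -/

import Mathlib

/-- The natural action of `Equiv.Perm (Fin d)` on `Fin d → G`, `(σ • f) i = f (σ⁻¹ i)`. -/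
def permAut (G : Type*) [Group G] (d : ℕ) :
    Equiv.Perm (Fin d) →* MulAut (Fin d → G) where
  toFun σ :=
    { toFun := fun f i => f (σ⁻¹ i)
      invFun := fun f i => f (σ i)
      left_inv := fun f => funext fun i => by simp
      right_inv := fun f => funext fun i => by simp
      map_mul' := fun f g => rfl }
  map_one' := by
    ext f i
    simp
  map_mul' := fun σ τ => by
    ext f i
    simp [mul_inv_rev]

/-- The permutational wreath product `G ≀ d = (Fin d → G) ⋊ Equiv.Perm (Fin d)`. -/
abbrev Wr (G : Type*) [Group G] (d : ℕ) :=
  (Fin d → G) ⋊[permAut G d] Equiv.Perm (Fin d)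

/-- The four generators `a, b, c, d` of the Grigorchuk cover. -/
inductive GrigGen : Type
  | a | b | c | d
  deriving DecidableEq

open GrigGen in
/-- The relators `a², b², c², d², bcd`. -/
def grigRels : Set (FreeGroup GrigGen) :=
  {FreeGroup.of a ^ 2, FreeGroup.of b ^ 2, FreeGroup.of c ^ 2, FreeGroup.of d ^ 2,
    FreeGroup.of b * FreeGroup.of c * FreeGroup.of d}

/-- The presented group `F = ⟨a,b,c,d ∣ a², b², c², d², bcd⟩ ≅ C₂ * (C₂ × C₂)`. -/
abbrev GrigF : Type := PresentedGroup grigRels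


open GrigGen

/-- The subgroup `K = ⟨b, c, d⟩` of `F`. -/
def GrigK : Subgroup GrigF :=
  Subgroup.closure {PresentedGroup.of b, PresentedGroup.of c, PresentedGroup.of d}

/-- The subgroup `A = ⟨a⟩` of `F`. -/
def GrigA : Subgroup GrigF :=
  Subgroup.closure {PresentedGroup.of a}

/-- The entry (state) of `φ_n^m (g)` at the multi-index `w : Fin m → Fin 2`, for a
sequence of self-similarity structures `φ n : F →* F ≀ 2` on a fixed group `F`. -/
def stSeq {F : Type*} [Group F] (φ : ℕ → (F →* Wr F 2)) (n : ℕ) :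
    (m : ℕ) → F → (Fin m → Fin 2) → F
  | 0, g, _ => g
  | m+1, g, w => (φ (n+m) (stSeq φ n m g fun k => w k.castSucc)).left (w (Fin.last m))

/-!
The point is that the nucleus `N = {1, a, b, c, d}` is the union of the subgroups `A = {1, a}` and
`K = {1, b, c, d}`, which generate `F`. A product of two elements of `N` lies in `AK`, `KA`, `A` or
`K`; as the entries of elements of `A` are trivial and those of elements of `K` lie in `N`, the
entries of such a product again lie in `N`. Grouping the letters of a word in pairs, the entries of
an element of `N ^ (2 * k)` lie in `N ^ k`. Hence the entries of an element of `N ^ 2 ^ k` lie in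
`N` from level `k` on, and every element of `F` is of this form.
-/

section Pointwise

open scoped Pointwise

lemma exists_mem_pow_of_mem_closure {M : Type*} [Monoid M] {S : Set M} {g : M}
    (hg : g ∈ Submonoid.closure S) : ∃ k, g ∈ S ^ k := by
  induction hg using Submonoid.closure_induction with
  | mem x hx => exact ⟨1, by rwa [pow_one]⟩
  | one => exact ⟨0, by rw [pow_zero, Set.mem_one]⟩
  | mul x y _ _ hx hy =>
    obtain ⟨k, hk⟩ := hx
    obtain ⟨l, hl⟩ := hy
    exact ⟨k + l, pow_add S k l ▸ Set.mul_mem_mul hk hl⟩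

namespace Wr

variable {G H : Type*} [Group G] [Group H] {d : ℕ}

/-- The elements of the wreath product `G ≀ d` all of whose entries lie in `T`; bounds on the
entries of `φ g` for `g ∈ X` are expressed as `Set.MapsTo φ X (entriesIn d T)`. -/
def entriesIn (d : ℕ) (T : Set G) : Set (Wr G d) :=
  {x | ∀ i, x.left i ∈ T}

lemma one_mem_entriesIn {T : Set G} (hT : 1 ∈ T) : 1 ∈ entriesIn d T :=
  fun _ => hT

lemma entriesIn_mul_subset (S T : Set G) :
    entriesIn d S * entriesIn d T ⊆ entriesIn d (S * T) := by
  rintro _ ⟨x, hx, y, hy, rfl⟩ i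
  exact Set.mul_mem_mul (hx i) (hy (x.right⁻¹ i))

lemma entriesIn_pow_subset (T : Set G) (k : ℕ) : entriesIn d T ^ k ⊆ entriesIn d (T ^ k) := by
  induction k with
  | zero =>
    rw [pow_zero, pow_zero, Set.one_subset]
    exact one_mem_entriesIn Set.one_mem_one
  | succ k ih =>
    rw [pow_succ, pow_succ]
    exact (Set.mul_subset_mul_right ih).trans (entriesIn_mul_subset _ _)

lemma mapsTo_mul_entriesIn {f : H →* Wr G d} {X Y : Set H} {S T : Set G}
    (hX : Set.MapsTo f X (entriesIn d S)) (hY : Set.MapsTo f Y (entriesIn d T)) :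
    Set.MapsTo f (X * Y) (entriesIn d (S * T)) := by
  rw [Set.mapsTo_iff_image_subset, Set.image_mul]
  exact (Set.mul_subset_mul hX.image_subset hY.image_subset).trans (entriesIn_mul_subset S T)

lemma mapsTo_pow_entriesIn {f : H →* Wr G d} {X : Set H} {T : Set G}
    (h : Set.MapsTo f X (entriesIn d T)) (k : ℕ) :
    Set.MapsTo f (X ^ k) (entriesIn d (T ^ k)) := by
  rw [Set.mapsTo_iff_image_subset, Set.image_pow]
  exact (Set.pow_subset_pow_left h.image_subset).trans (entriesIn_pow_subset T k)

end Wr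

section Contraction

variable {G : Type*} [Group G] {S : Set G}

/-- The similar group with all `G_n = G` and all `d_n = 2` contracts to the constant sequence `N`.
Finiteness of `N` is not part of the notion. -/
def ContractsTo (φ : ℕ → (G →* Wr G 2)) (N : Set G) : Prop :=
  ∀ (n : ℕ) (g : G), ∃ M : ℕ, ∀ m ≥ M, ∀ w : Fin m → Fin 2, stSeq φ n m g w ∈ N

lemma ContractsTo.mono {φ : ℕ → (G →* Wr G 2)} {N N' : Set G} (h : ContractsTo φ N)
    (hN : N ⊆ N') : ContractsTo φ N' := fun n g =>
  let ⟨M, hM⟩ := h n g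
  ⟨M, fun m hm w => hN (hM m hm w)⟩

-- At `k = 0` truncation turns this into `S` mapping to `entriesIn d S`, so iterating it more than
-- `k` times keeps the entries in `S`.
lemma mapsTo_pow_two_pow_entriesIn {d : ℕ} {f : G →* Wr G d} (h1 : 1 ∈ S)
    (hf : Set.MapsTo f (S * S) (Wr.entriesIn d S)) (k : ℕ) :
    Set.MapsTo f (S ^ 2 ^ k) (Wr.entriesIn d (S ^ 2 ^ (k - 1))) := by
  cases k with
  | zero =>
    have hS : S ⊆ S * S := Set.subset_mul_left S h1
    simpa using hf.mono_left hS
  | succ k =>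
    have hpow : S ^ 2 ^ (k + 1) = (S * S) ^ 2 ^ k := by rw [← sq, ← pow_mul, pow_succ']
    rw [hpow, Nat.add_sub_cancel]
    exact Wr.mapsTo_pow_entriesIn hf (2 ^ k)

lemma stSeq_mem_pow_two_pow {φ : ℕ → (G →* Wr G 2)} (h1 : 1 ∈ S)
    (hφ : ∀ n, Set.MapsTo (φ n) (S * S) (Wr.entriesIn 2 S)) {k : ℕ} {g : G}
    (hg : g ∈ S ^ 2 ^ k) (n m : ℕ) (w : Fin m → Fin 2) :
    stSeq φ n m g w ∈ S ^ 2 ^ (k - m) := by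
  induction m with
  | zero => exact hg
  | succ m ih => exact mapsTo_pow_two_pow_entriesIn h1 (hφ (n + m)) (k - m) (ih _) _

theorem contractsTo_of_mapsTo_mul_self {φ : ℕ → (G →* Wr G 2)} (h1 : 1 ∈ S)
    (hgen : Submonoid.closure S = ⊤)
    (hφ : ∀ n, Set.MapsTo (φ n) (S * S) (Wr.entriesIn 2 S)) : ContractsTo φ S := by
  intro n g
  obtain ⟨k, hk⟩ : ∃ k, g ∈ S ^ k := exists_mem_pow_of_mem_closure (hgen ▸ Submonoid.mem_top g)
  have hg : g ∈ S ^ 2 ^ k := Set.pow_subset_pow_right h1 Nat.lt_two_pow_self.le hk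
  refine ⟨k, fun m hm w => ?_⟩
  simpa [Nat.sub_eq_zero_of_le hm] using stSeq_mem_pow_two_pow h1 hφ hg n m w

variable {A K : Subgroup G}

lemma submonoidClosure_union_eq_top (hgen : A ⊔ K = ⊤) :
    Submonoid.closure (A ∪ K : Set G) = ⊤ := by
  have hinv : (A ∪ K : Set G)⁻¹ = (A ∪ K : Set G) := by simp
  rw [← Subgroup.top_toSubmonoid, ← hgen, Subgroup.sup_eq_closure, Subgroup.closure_toSubmonoid,
    hinv, Set.union_self]

lemma mapsTo_union_mul_union_entriesIn {d : ℕ} {f : G →* Wr G d}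
    (hA : Set.MapsTo f A (Wr.entriesIn d {1}))
    (hK : Set.MapsTo f K (Wr.entriesIn d (A ∪ K))) :
    Set.MapsTo f ((A ∪ K : Set G) * (A ∪ K : Set G)) (Wr.entriesIn d (A ∪ K)) := by
  have hA' : Set.MapsTo f A (Wr.entriesIn d (A ∪ K)) :=
    fun x hx i => Or.inl (Set.mem_singleton_iff.mp (hA hx i) ▸ A.one_mem)
  rw [Set.union_mul, Set.mul_union, Set.mul_union, coe_mul_coe, coe_mul_coe]
  refine (hA'.union ?_).union (.union ?_ hK)
  · simpa using Wr.mapsTo_mul_entriesIn hA hK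
  · simpa using Wr.mapsTo_mul_entriesIn hK hA

theorem generalized_grigorchuk_contracting_general {φ : ℕ → (G →* Wr G 2)} (hgen : A ⊔ K = ⊤)
    (hA : ∀ n, Set.MapsTo (φ n) A (Wr.entriesIn 2 {1}))
    (hK : ∀ n, Set.MapsTo (φ n) K (Wr.entriesIn 2 (A ∪ K))) : ContractsTo φ (A ∪ K) :=
  contractsTo_of_mapsTo_mul_self (Or.inl A.one_mem) (submonoidClosure_union_eq_top hgen)
    fun n => mapsTo_union_mul_union_entriesIn (hA n) (hK n)

end Contraction

end Pointwise

section Closure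

variable {G : Type*} [Group G] {x y z : G}

lemma mem_closure_singleton_of_sq_eq_one (hx : x ^ 2 = 1) {g : G}
    (hg : g ∈ Subgroup.closure {x}) : g = 1 ∨ g = x := by
  obtain ⟨n, rfl⟩ := Subgroup.mem_closure_singleton.mp hg
  have hx' : x ^ (2 : ℤ) = 1 := mod_cast hx
  obtain ⟨k, rfl | rfl⟩ := Int.even_or_odd' n <;> simp [zpow_add, zpow_mul, hx']

lemma mem_closure_triple_of_klein_relations (hx : x ^ 2 = 1) (hy : y ^ 2 = 1) (hz : z ^ 2 = 1)
    (hxyz : x * y * z = 1) {g : G} (hg : g ∈ Subgroup.closure {x, y, z}) :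
    g = 1 ∨ g = x ∨ g = y ∨ g = z := by
  rw [sq] at hx hy hz
  obtain rfl : x * y = z := mul_right_cancel (hxyz.trans hz.symm)
  have hyx : y * x = x * y := by
    calc y * x = y⁻¹ * x⁻¹ := by rw [inv_eq_of_mul_eq_one_left hx, inv_eq_of_mul_eq_one_left hy]
      _ = (x * y)⁻¹ := (mul_inv_rev x y).symm
      _ = x * y := inv_eq_of_mul_eq_one_left hz
  have hxxy : x * (x * y) = y := by rw [← mul_assoc, hx, one_mul]
  have hyxy : y * (x * y) = x := by rw [← hyx, ← mul_assoc, hy, one_mul]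
  have hxyx : x * y * x = y := by rw [mul_assoc, hyx, hxxy]
  have hxyy : x * y * y = x := by rw [mul_assoc, hy, mul_one]
  induction hg using Subgroup.closure_induction with
  | mem g hg => exact Or.inr hg
  | one => exact Or.inl rfl
  | mul g h _ _ hg hh =>
    rcases hg with rfl | rfl | rfl | rfl <;> rcases hh with rfl | rfl | rfl | rfl <;>
      simp only [one_mul, mul_one, true_or, or_true, *]
  | inv g _ hg =>
    have hgg : g * g = 1 := by rcases hg with rfl | rfl | rfl | rfl <;> simp only [one_mul, *]
    rwa [inv_eq_of_mul_eq_one_left hgg]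

end Closure

namespace GrigF

lemma of_sq (s : GrigGen) : (PresentedGroup.of s : GrigF) ^ 2 = 1 := by
  have hs : FreeGroup.of s ^ 2 ∈ grigRels := by cases s <;> simp [grigRels]
  exact (map_pow _ _ _).symm.trans (PresentedGroup.one_of_mem hs)

lemma of_b_mul_of_c_mul_of_d :
    (PresentedGroup.of b * PresentedGroup.of c * PresentedGroup.of d : GrigF) = 1 := by
  have hbcd : FreeGroup.of b * FreeGroup.of c * FreeGroup.of d ∈ grigRels := by simp [grigRels]
  rw [← PresentedGroup.one_of_mem hbcd, map_mul, map_mul]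
  rfl

lemma eq_one_or_eq_a_of_mem_grigA {x : GrigF} (hx : x ∈ GrigA) :
    x = 1 ∨ x = PresentedGroup.of a :=
  mem_closure_singleton_of_sq_eq_one (of_sq a) hx

lemma eq_one_or_eq_b_or_eq_c_or_eq_d_of_mem_grigK {x : GrigF} (hx : x ∈ GrigK) :
    x = 1 ∨ x = PresentedGroup.of b ∨ x = PresentedGroup.of c ∨ x = PresentedGroup.of d :=
  mem_closure_triple_of_klein_relations (of_sq b) (of_sq c) (of_sq d) of_b_mul_of_c_mul_of_d hx

lemma grigA_union_grigK_subset :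
    (GrigA ∪ GrigK : Set GrigF) ⊆ {1, PresentedGroup.of a, PresentedGroup.of b,
      PresentedGroup.of c, PresentedGroup.of d} := by
  rintro x (hx | hx)
  · rcases eq_one_or_eq_a_of_mem_grigA hx with rfl | rfl <;> simp
  · rcases eq_one_or_eq_b_or_eq_c_or_eq_d_of_mem_grigK hx with rfl | rfl | rfl | rfl <;> simp

lemma grigA_sup_grigK : GrigA ⊔ GrigK = ⊤ := by
  rw [GrigA, GrigK, ← Subgroup.closure_union, eq_top_iff,
    ← PresentedGroup.closure_range_of grigRels]
  refine Subgroup.closure_mono ?_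
  rintro _ ⟨s, rfl⟩
  cases s <;> simp

variable {f : GrigF →* Wr GrigF 2}

lemma mapsTo_grigA_entriesIn (ha : (f (PresentedGroup.of a)).left = ![1, 1]) :
    Set.MapsTo f GrigA (Wr.entriesIn 2 {1}) := by
  intro x hx
  rcases eq_one_or_eq_a_of_mem_grigA hx with rfl | rfl
  · rw [map_one]
    exact Wr.one_mem_entriesIn rfl
  · simp [Wr.entriesIn, ha]

lemma mapsTo_grigK_entriesIn {u v w : GrigA}
    (hb : (f (PresentedGroup.of b)).left = ![(u : GrigF), PresentedGroup.of b])
    (hc : (f (PresentedGroup.of c)).left = ![(v : GrigF), PresentedGroup.of c])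
    (hd : (f (PresentedGroup.of d)).left = ![(w : GrigF), PresentedGroup.of d]) :
    Set.MapsTo f GrigK (Wr.entriesIn 2 (GrigA ∪ GrigK)) := by
  have mem_of_left_eq {x : GrigF} {y : GrigA} (hx : x ∈ GrigK)
      (hfx : (f x).left = ![(y : GrigF), x]) :
      f x ∈ Wr.entriesIn 2 (GrigA ∪ GrigK : Set GrigF) := by
    simp [Wr.entriesIn, hfx, hx]
  intro x hx
  rcases eq_one_or_eq_b_or_eq_c_or_eq_d_of_mem_grigK hx with rfl | rfl | rfl | rfl
  · rw [map_one]
    exact Wr.one_mem_entriesIn (Or.inl GrigA.one_mem)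
  exacts [mem_of_left_eq hx hb, mem_of_left_eq hx hc, mem_of_left_eq hx hd]

end GrigF

/-- For any sequence `(ω n)` of homomorphisms `K → A`, the similar group given by the
sequence of homomorphisms `φ n : F →* F ≀ 2` with `φ n (a) = ⟨1,1⟩(1,2)` and
`φ n (x) = ⟨ω n (x), x⟩` for `x ∈ {b,c,d}` contracts to the constant sequence of finite
subsets given by the image of `{1, a, b, c, d}` in `F`. -/
theorem generalized_grigorchuk_contracting
    (ω : ℕ → (GrigK →* GrigA)) (φ : ℕ → (GrigF →* Wr GrigF 2))
    (ha : ∀ n, φ n (PresentedGroup.of a) =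
      SemidirectProduct.mk ![1, 1] (Equiv.swap 0 1))
    (hb : ∀ n, φ n (PresentedGroup.of b) =
      SemidirectProduct.mk
        ![(ω n ⟨PresentedGroup.of b, Subgroup.subset_closure (by simp)⟩ : GrigF),
          PresentedGroup.of b] 1)
    (hc : ∀ n, φ n (PresentedGroup.of c) =
      SemidirectProduct.mk
        ![(ω n ⟨PresentedGroup.of c, Subgroup.subset_closure (by simp)⟩ : GrigF),
          PresentedGroup.of c] 1)
    (hd : ∀ n, φ n (PresentedGroup.of d) =
      SemidirectProduct.mk
        ![(ω n ⟨PresentedGroup.of d, Subgroup.subset_closure (by simp)⟩ : GrigF),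
          PresentedGroup.of d] 1) :
    ∀ (n : ℕ) (g : GrigF), ∃ M : ℕ, ∀ m ≥ M, ∀ w : Fin m → Fin 2,
      stSeq φ n m g w ∈
        ({1, PresentedGroup.of a, PresentedGroup.of b, PresentedGroup.of c,
          PresentedGroup.of d} : Set GrigF) := by
  have hA (n : ℕ) : Set.MapsTo (φ n) GrigA (Wr.entriesIn 2 {1}) :=
    GrigF.mapsTo_grigA_entriesIn (by rw [ha n])
  have hK (n : ℕ) : Set.MapsTo (φ n) GrigK (Wr.entriesIn 2 (GrigA ∪ GrigK)) :=
    GrigF.mapsTo_grigK_entriesIn (by rw [hb n]) (by rw [hc n]) (by rw [hd n])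
  exact (generalized_grigorchuk_contracting_general GrigF.grigA_sup_grigK hA hK).mono
    GrigF.grigA_union_grigK_subset
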